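/- For every natural number n, every real number α > 0, every symmetric positive-definite real n×n matrix Q, every totally symmetric real 3-tensor V_{μνρ}, and every totally symmetric real 5-tensor U_{μνρστ} (all indices in {1,…,n}), the normalized Gaussian integral of the product of the cubic vertex V₃(x) = (1/3!) ∑ V_{μνρ} x^μ x^ν x^ρ and the quintic vertex V₅(x) = (1/5!) ∑ U_{μνρστ} x^μ x^ν x^ρ x^σ x^τ satisfies ⟨V₃(x)·V₅(x)⟩ = (1/α⁴)·( W₃/12 + W₄/16 ), where W₃ = ∑ V_{abc} U_{defgh} (Q⁻¹)^{ad}(Q⁻¹)^{be}(Q⁻¹)^{cf}(Q⁻¹)^{gh} and W₄ = ∑ V_{abc} U_{defgh} (Q⁻¹)^{ab}(Q⁻¹)^{de}(Q⁻¹)^{fg}(Q⁻¹)^{ch} (all indices summed from 1 to n). -/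

import Mathlib

open MeasureTheory

/-!
Integration by parts against the Gaussian weight `exp (-xᵀAx / 2)` gives Stein's identity
`E (x_a p) = ∑ b, (A⁻¹)_{ab} E (∂_b p)` for every polynomial `p`. It determines `E` up to the
factor `E 1`: repeatedly removing one leg of a vertex and differentiating the rest produces all
ways of joining the legs in pairs by propagators `A⁻¹`. For a cubic vertex `V` and a quintic
vertex `U` there are `5 · 4 · 3 = 60` pairings with three `V`–`U` bonds and one loop on `U`, and
`3 · 5 · 3 = 45` with a single bond, a loop on `V` and two loops on `U`. Dividing by
`3! · 5! = 720` gives the weights `1 / 12` and `1 / 16`; the substitution `A = α Q` contributes a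
factor `α⁻¹` for each of the four propagators.
-/

section SymmetricTensor

open Matrix

theorem sum_fin_succ_pi {ι M : Type*} [Fintype ι] [AddCommMonoid M] {k : ℕ}
    (F : (Fin (k + 1) → ι) → M) : ∑ f, F f = ∑ a, ∑ f : Fin k → ι, F (vecCons a f) := by
  rw [← (Fin.consEquiv fun _ => ι).sum_comp, Fintype.sum_prod_type]
  rfl

variable {ι R : Type*} {k : ℕ}

/-- A covariant tensor of rank `k`, encoded as a function of its multi-index `Fin k → ι`, is totally
symmetric if permuting the indices does not change its components. -/
def IsSymmTensor (T : (Fin k → ι) → R) : Prop :=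
  ∀ (σ : Equiv.Perm (Fin k)) (f : Fin k → ι), T (f ∘ σ) = T f

/-- The tensor of one rank lower obtained by fixing the first index to be `a`. -/
def tensorSlice (T : (Fin (k + 1) → ι) → R) (a : ι) : (Fin k → ι) → R :=
  fun f => T (vecCons a f)

theorem IsSymmTensor.slice {T : (Fin (k + 1) → ι) → R} (hT : IsSymmTensor T) (a : ι) :
    IsSymmTensor (tensorSlice T a) := fun σ f => by
  have h : vecCons a (f ∘ σ) = vecCons a f ∘ Equiv.Perm.decomposeFin.symm (0, σ) := by
    ext i
    cases i using Fin.cases <;> simp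
  exact (congrArg T h).trans (hT _ _)

theorem IsSymmTensor.slice_slice_comm {T : (Fin (k + 2) → ι) → R} (hT : IsSymmTensor T)
    (a b : ι) :
    tensorSlice (tensorSlice T a) b = tensorSlice (tensorSlice T b) a := by
  ext f
  have h : vecCons a (vecCons b f) = vecCons b (vecCons a f) ∘ Equiv.swap 0 1 := by
    ext i
    refine Fin.cases (by simp) (fun i => Fin.cases (by simp) (fun i => ?_) i) i
    simp [Equiv.swap_apply_of_ne_of_ne, Fin.ext_iff]
  exact (congrArg T h).trans (hT _ _)

end SymmetricTensor

section TensorForm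

open MvPolynomial Matrix

variable {ι R : Type*} [Fintype ι] [CommSemiring R] {k : ℕ}

/-- The homogeneous polynomial `∑ T_{i₁ … i_k} X_{i₁} ⋯ X_{i_k}` attached to a rank `k` tensor, that
is, its vertex without the symmetry factor `1 / k!`. -/
noncomputable def tensorForm (T : (Fin k → ι) → R) : MvPolynomial ι R :=
  ∑ f, T f • ∏ i, X (f i)

theorem eval_tensorForm (T : (Fin k → ι) → R) (x : ι → R) :
    eval x (tensorForm T) = ∑ f, T f * ∏ i, x (f i) := by
  simp [tensorForm, smul_eval]

theorem tensorForm_zero_rank (T : (Fin 0 → ι) → R) : tensorForm T = T ![] • 1 := by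
  simp [tensorForm, Subsingleton.elim default ![]]

theorem tensorForm_succ (T : (Fin (k + 1) → ι) → R) :
    tensorForm T = ∑ a, X a * tensorForm (tensorSlice T a) := by
  simp only [tensorForm, tensorSlice, sum_fin_succ_pi, Fin.prod_univ_succ, cons_val_zero,
    cons_val_succ, Finset.mul_sum, mul_smul_comm]

theorem pderiv_sum_X_mul (p : ι → MvPolynomial ι R) (b : ι) :
    pderiv b (∑ a, X a * p a) = p b + ∑ a, X a * pderiv b (p a) := by
  classical
  simp only [map_sum, pderiv_mul, pderiv_X, Finset.sum_add_distrib, Pi.single_apply, ite_mul,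
    one_mul, zero_mul, Finset.sum_ite_eq', Finset.mem_univ, if_true]

theorem pderiv_tensorForm {T : (Fin (k + 1) → ι) → R} (hT : IsSymmTensor T) (b : ι) :
    pderiv b (tensorForm T) = (k + 1 : R) • tensorForm (tensorSlice T b) := by
  induction k with
  | zero =>
    simp only [tensorForm_succ T, pderiv_sum_X_mul, tensorForm_zero_rank, Derivation.map_smul,
      pderiv_one, smul_zero, mul_zero, Finset.sum_const_zero, add_zero, Nat.cast_zero, zero_add,
      one_smul]
  | succ k ih =>
    calc pderiv b (tensorForm T)
        = tensorForm (tensorSlice T b)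
            + ∑ a, X a * (k + 1 : R) • tensorForm (tensorSlice (tensorSlice T a) b) := by
          rw [tensorForm_succ, pderiv_sum_X_mul]
          simp only [ih (hT.slice _)]
      _ = tensorForm (tensorSlice T b) + (k + 1 : R) • tensorForm (tensorSlice T b) := by
          rw [tensorForm_succ (tensorSlice T b)]
          simp only [hT.slice_slice_comm _ b, Finset.smul_sum, mul_smul_comm]
      _ = ((k + 1 : ℕ) + 1 : R) • tensorForm (tensorSlice T b) := by
          push_cast
          module

/-- A linear functional on polynomials satisfying Stein's identity with covariance `S`, the property
of Gaussian integrals from which Wick's theorem follows. -/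
def IsSteinFunctional (S : Matrix ι ι R) (E : MvPolynomial ι R →ₗ[R] R) : Prop :=
  ∀ a p, E (X a * p) = ∑ b, S a b * E (pderiv b p)

/-- The contraction `V_{abc} U_{defgh} S^{ad} S^{be} S^{cf} S^{gh}`, written `W₃` for `S = Q⁻¹`. -/
def threeBondContraction (S : Matrix ι ι R) (V : (Fin 3 → ι) → R) (U : (Fin 5 → ι) → R) : R :=
  ∑ a, ∑ b, ∑ c, ∑ d, ∑ e, ∑ f, ∑ g, ∑ h,
    V ![a, b, c] * U ![d, e, f, g, h] * S a d * S b e * S c f * S g h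

/-- The contraction `V_{abc} U_{defgh} S^{ab} S^{de} S^{fg} S^{ch}`, written `W₄` for `S = Q⁻¹`. -/
def oneBondContraction (S : Matrix ι ι R) (V : (Fin 3 → ι) → R) (U : (Fin 5 → ι) → R) : R :=
  ∑ a, ∑ b, ∑ c, ∑ d, ∑ e, ∑ f, ∑ g, ∑ h,
    V ![a, b, c] * U ![d, e, f, g, h] * S a b * S d e * S f g * S c h

theorem threeBondContraction_smul (r : R) (S : Matrix ι ι R) (V : (Fin 3 → ι) → R)
    (U : (Fin 5 → ι) → R) :
    threeBondContraction (r • S) V U = r ^ 4 * threeBondContraction S V U := by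
  simp only [threeBondContraction, Matrix.smul_apply, smul_eq_mul, Finset.mul_sum]
  iterate 8 refine Finset.sum_congr rfl fun _ _ => ?_
  ring

theorem oneBondContraction_smul (r : R) (S : Matrix ι ι R) (V : (Fin 3 → ι) → R)
    (U : (Fin 5 → ι) → R) :
    oneBondContraction (r • S) V U = r ^ 4 * oneBondContraction S V U := by
  simp only [oneBondContraction, Matrix.smul_apply, smul_eq_mul, Finset.mul_sum]
  iterate 8 refine Finset.sum_congr rfl fun _ _ => ?_
  ring

theorem eval_tensorForm_three (T : (Fin 3 → ι) → R) (x : ι → R) :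
    eval x (tensorForm T) = ∑ a, ∑ b, ∑ c, T ![a, b, c] * x a * x b * x c := by
  simp [eval_tensorForm, sum_fin_succ_pi, Fin.prod_univ_three, mul_assoc,
    Subsingleton.elim default ![]]

theorem eval_tensorForm_five (T : (Fin 5 → ι) → R) (x : ι → R) :
    eval x (tensorForm T) =
      ∑ a, ∑ b, ∑ c, ∑ d, ∑ e, T ![a, b, c, d, e] * x a * x b * x c * x d * x e := by
  simp [eval_tensorForm, sum_fin_succ_pi, Fin.prod_univ_five, mul_assoc,
    Subsingleton.elim default ![]]

namespace IsSteinFunctional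

variable {S : Matrix ι ι R} {E : MvPolynomial ι R →ₗ[R] R}

theorem map_tensorForm_mul (hE : IsSteinFunctional S E) (T : (Fin (k + 1) → ι) → R)
    (p : MvPolynomial ι R) :
    E (tensorForm T * p) =
      ∑ a, ∑ b, S a b * E (pderiv b (tensorForm (tensorSlice T a) * p)) := by
  simp only [tensorForm_succ T, Finset.sum_mul, map_sum, mul_assoc, hE _ _]

theorem map_tensorForm (hE : IsSteinFunctional S E) {T : (Fin (k + 2) → ι) → R}
    (hT : IsSymmTensor T) :
    E (tensorForm T) =
      (k + 1) * ∑ a, ∑ b, S a b * E (tensorForm (tensorSlice (tensorSlice T a) b)) := by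
  rw [← mul_one (tensorForm T), hE.map_tensorForm_mul]
  simp only [mul_one, pderiv_tensorForm (hT.slice _), map_smul, smul_eq_mul, Finset.mul_sum,
    mul_left_comm]

theorem map_linearForm_mul (hE : IsSteinFunctional S E) (V : (Fin 1 → ι) → R)
    {U : (Fin (k + 1) → ι) → R} (hU : IsSymmTensor U) :
    E (tensorForm V * tensorForm U) =
      (k + 1) * ∑ a, ∑ b, V ![a] * S a b * E (tensorForm (tensorSlice U b)) := by
  simp only [hE.map_tensorForm_mul, tensorForm_zero_rank, tensorSlice, smul_one_mul,
    Derivation.map_smul, map_smul, smul_eq_mul, pderiv_tensorForm hU, Finset.mul_sum]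
  iterate 2 refine Finset.sum_congr rfl fun _ _ => ?_
  ring

theorem map_tensorForm_mul_tensorForm (hE : IsSteinFunctional S E) {m : ℕ}
    {V : (Fin (m + 2) → ι) → R} (hV : IsSymmTensor V) {U : (Fin (k + 1) → ι) → R}
    (hU : IsSymmTensor U) :
    E (tensorForm V * tensorForm U) =
      (m + 1) * ∑ a, ∑ b, S a b *
        E (tensorForm (tensorSlice (tensorSlice V a) b) * tensorForm U) +
      (k + 1) * ∑ a, ∑ b, S a b *
        E (tensorForm (tensorSlice V a) * tensorForm (tensorSlice U b)) := by
  simp only [hE.map_tensorForm_mul V, pderiv_mul, pderiv_tensorForm (hV.slice _),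
    pderiv_tensorForm hU, map_add, smul_mul_assoc, mul_smul_comm, map_smul, smul_eq_mul,
    mul_add, Finset.sum_add_distrib, Finset.mul_sum, mul_left_comm]

theorem map_quadraticForm_mul (hE : IsSteinFunctional S E) {V : (Fin 2 → ι) → R}
    (hV : IsSymmTensor V) {U : (Fin (k + 2) → ι) → R} (hU : IsSymmTensor U) :
    E (tensorForm V * tensorForm U) =
      (∑ a, ∑ b, V ![a, b] * S a b) * E (tensorForm U) +
      (k + 2) * (k + 1) * ∑ a, ∑ b, ∑ c, ∑ d, V ![a, b] * S a c * S b d *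
        E (tensorForm (tensorSlice (tensorSlice U c) d)) := by
  rw [hE.map_tensorForm_mul_tensorForm hV hU]
  congr 1
  · simp only [tensorForm_zero_rank, tensorSlice, smul_one_mul, map_smul, smul_eq_mul,
      Finset.sum_mul, Nat.cast_zero, zero_add, one_mul]
    iterate 2 refine Finset.sum_congr rfl fun _ _ => ?_
    ring
  · simp only [hE.map_linearForm_mul _ (hU.slice _), Finset.mul_sum]
    refine Finset.sum_congr rfl fun a _ => Finset.sum_comm.trans ?_
    iterate 3 refine Finset.sum_congr rfl fun _ _ => ?_
    push_cast [tensorSlice]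
    ring

theorem sum_mul_map_slice_slice_mul (hE : IsSteinFunctional S E) (V : (Fin 3 → ι) → R)
    {U : (Fin (k + 1) → ι) → R} (hU : IsSymmTensor U) :
    ∑ a, ∑ b, S a b * E (tensorForm (tensorSlice (tensorSlice V a) b) * tensorForm U) =
      (k + 1) * ∑ a, ∑ b, ∑ c, ∑ d,
        V ![a, b, c] * S a b * S c d * E (tensorForm (tensorSlice U d)) := by
  simp only [hE.map_linearForm_mul _ hU, tensorSlice, Finset.mul_sum]
  iterate 4 refine Finset.sum_congr rfl fun _ _ => ?_
  ring

theorem sum_mul_map_slice_mul_slice (hE : IsSteinFunctional S E) {V : (Fin 3 → ι) → R}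
    (hV : IsSymmTensor V) {U : (Fin (k + 3) → ι) → R} (hU : IsSymmTensor U) :
    ∑ a, ∑ b, S a b * E (tensorForm (tensorSlice V a) * tensorForm (tensorSlice U b)) =
      (∑ a, ∑ b, ∑ c, ∑ d, V ![a, b, c] * S a b * S c d * E (tensorForm (tensorSlice U d))) +
      (k + 2) * (k + 1) * ∑ a, ∑ b, ∑ c, ∑ d, ∑ e, ∑ f,
        V ![a, b, c] * S a d * S b e * S c f *
          E (tensorForm (tensorSlice (tensorSlice (tensorSlice U d) e) f)) := by
  have rotate (a b c : ι) : V ![c, a, b] = V ![a, b, c] := by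
    rw [← hV (finRotate 3)]
    congr 1
    ext i
    fin_cases i <;> rfl
  simp only [hE.map_quadraticForm_mul (hV.slice _) (hU.slice _), mul_add (S _ _),
    Finset.sum_add_distrib]
  congr 1
  · simp only [tensorSlice, Finset.mul_sum, Finset.sum_mul]
    refine Finset.sum_comm_cycle.trans <| Finset.sum_congr rfl fun a _ =>
      Finset.sum_comm_cycle.trans <| Finset.sum_congr rfl fun b _ =>
      Finset.sum_congr rfl fun c _ => Finset.sum_congr rfl fun d _ => ?_
    rw [rotate]
    ring
  · simp only [Finset.mul_sum]
    refine Finset.sum_congr rfl fun a _ => Finset.sum_comm_cycle.symm.trans ?_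
    iterate 5 refine Finset.sum_congr rfl fun _ _ => ?_
    simp only [tensorSlice]
    ring

/- The coefficients count the `3` loops on `V` and the `k + 3` legs of `U` that can be joined to its
third leg, respectively the injections of the legs of `V` into those of `U`. -/
theorem map_cubicForm_mul (hE : IsSteinFunctional S E) {V : (Fin 3 → ι) → R}
    (hV : IsSymmTensor V) {U : (Fin (k + 3) → ι) → R} (hU : IsSymmTensor U) :
    E (tensorForm V * tensorForm U) =
      3 * (k + 3) * ∑ a, ∑ b, ∑ c, ∑ d, V ![a, b, c] * S a b * S c d *
        E (tensorForm (tensorSlice U d)) +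
      (k + 3) * (k + 2) * (k + 1) * ∑ a, ∑ b, ∑ c, ∑ d, ∑ e, ∑ f,
        V ![a, b, c] * S a d * S b e * S c f *
          E (tensorForm (tensorSlice (tensorSlice (tensorSlice U d) e) f)) := by
  rw [hE.map_tensorForm_mul_tensorForm hV hU, hE.sum_mul_map_slice_slice_mul V hU,
    hE.sum_mul_map_slice_mul_slice hV hU]
  push_cast
  ring

theorem map_quadraticForm (hE : IsSteinFunctional S E) {T : (Fin 2 → ι) → R}
    (hT : IsSymmTensor T) :
    E (tensorForm T) = (∑ a, ∑ b, T ![a, b] * S a b) * E 1 := by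
  rw [hE.map_tensorForm hT]
  simp only [tensorForm_zero_rank, tensorSlice, map_smul, smul_eq_mul, Nat.cast_zero, zero_add,
    one_mul, mul_left_comm (S _ _), mul_assoc, Finset.sum_mul]

theorem map_quarticForm (hE : IsSteinFunctional S E) {T : (Fin 4 → ι) → R}
    (hT : IsSymmTensor T) :
    E (tensorForm T) = 3 * (∑ a, ∑ b, ∑ c, ∑ d, T ![a, b, c, d] * S a b * S c d) * E 1 := by
  rw [hE.map_tensorForm hT]
  simp only [hE.map_quadraticForm ((hT.slice _).slice _), tensorSlice, Finset.mul_sum,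
    Finset.sum_mul]
  iterate 4 refine Finset.sum_congr rfl fun _ _ => ?_
  push_cast
  ring

theorem map_cubicForm_mul_quinticForm (hE : IsSteinFunctional S E) {V : (Fin 3 → ι) → R}
    (hV : IsSymmTensor V) {U : (Fin 5 → ι) → R} (hU : IsSymmTensor U) :
    E (tensorForm V * tensorForm U) =
      (60 * threeBondContraction S V U + 45 * oneBondContraction S V U) * E 1 := by
  have rotate (d e f g h : ι) : U ![h, d, e, f, g] = U ![d, e, f, g, h] := by
    rw [← hU (finRotate 5)]
    congr 1
    ext i
    fin_cases i <;> rfl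
  have one_bond : ∑ a, ∑ b, ∑ c, ∑ d, V ![a, b, c] * S a b * S c d *
        E (tensorForm (tensorSlice U d)) =
      3 * oneBondContraction S V U * E 1 := by
    simp only [oneBondContraction, hE.map_quarticForm (hU.slice _), Finset.mul_sum,
      Finset.sum_mul]
    refine Finset.sum_congr rfl fun a _ => Finset.sum_congr rfl fun b _ =>
      Finset.sum_congr rfl fun c _ => Finset.sum_comm.trans <| Finset.sum_congr rfl fun d _ =>
      Finset.sum_comm.trans <| Finset.sum_congr rfl fun e _ =>
      Finset.sum_comm.trans <| Finset.sum_congr rfl fun f _ =>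
      Finset.sum_comm.trans <| Finset.sum_congr rfl fun g _ => Finset.sum_congr rfl fun h _ => ?_
    simp only [tensorSlice]
    rw [rotate]
    ring
  have three_bonds : ∑ a, ∑ b, ∑ c, ∑ d, ∑ e, ∑ f, V ![a, b, c] * S a d * S b e * S c f *
        E (tensorForm (tensorSlice (tensorSlice (tensorSlice U d) e) f)) =
      threeBondContraction S V U * E 1 := by
    simp only [threeBondContraction, hE.map_quadraticForm (((hU.slice _).slice _).slice _),
      tensorSlice, Finset.mul_sum, Finset.sum_mul]
    iterate 8 refine Finset.sum_congr rfl fun _ _ => ?_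
    ring
  rw [hE.map_cubicForm_mul (k := 2) hV hU, one_bond, three_bonds]
  push_cast
  ring

end IsSteinFunctional

end TensorForm

section GaussianIntegral

open MvPolynomial Matrix

theorem hasLineDerivAt_eval {ι 𝕜 : Type*} [DecidableEq ι] [NontriviallyNormedField 𝕜]
    (p : MvPolynomial ι 𝕜) (x : ι → 𝕜) (c : ι) :
    HasLineDerivAt 𝕜 (fun y => eval y p) (eval x (pderiv c p)) x (Pi.single c 1) := by
  induction p using MvPolynomial.induction_on with
  | C r => simpa [HasLineDerivAt] using hasDerivAt_const (0 : 𝕜) r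
  | add p q hp hq =>
    simp only [map_add]
    exact HasDerivAt.add hp hq
  | mul_X p i hp =>
    have h_coord : HasDerivAt (fun t : 𝕜 => (x + t • (Pi.single c 1 : ι → 𝕜)) i)
        ((Pi.single c 1 : ι → 𝕜) i) 0 := by
      simpa using ((hasDerivAt_id (0 : 𝕜)).mul_const _).const_add (x i)
    simp only [HasLineDerivAt, map_mul, eval_X] at hp ⊢
    refine (hp.mul h_coord).congr_deriv ?_
    rw [pderiv_mul, pderiv_X, map_add, map_mul, map_mul, eval_X]
    obtain rfl | h := eq_or_ne i c
    · simp
    · simp [h]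

theorem hasLineDerivAt_dotProduct_mulVec_self {ι 𝕜 : Type*} [Fintype ι] [DecidableEq ι]
    [NontriviallyNormedField 𝕜] {A : Matrix ι ι 𝕜} (hA : A.IsSymm) (x : ι → 𝕜) (c : ι) :
    HasLineDerivAt 𝕜 (fun y => y ⬝ᵥ A *ᵥ y) (2 * (A *ᵥ x) c) x (Pi.single c 1) := by
  have h_expand (t : 𝕜) : (x + t • Pi.single c 1) ⬝ᵥ A *ᵥ (x + t • Pi.single c 1) =
      x ⬝ᵥ A *ᵥ x + t * (2 * (A *ᵥ x) c) + t ^ 2 * A c c := by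
    have h_symm : x ⬝ᵥ A.col c = (A *ᵥ x) c := by
      rw [dotProduct_comm, ← row_transpose, hA.eq]
      rfl
    simp only [mulVec_add, mulVec_smul, mulVec_single, MulOpposite.op_one, one_smul,
      dotProduct_add, add_dotProduct, smul_dotProduct, single_dotProduct, one_mul, smul_eq_mul,
      dotProduct_smul, h_symm, col_apply]
    ring
  unfold HasLineDerivAt
  simp only [h_expand]
  simpa using (((hasDerivAt_id' (0 : 𝕜)).mul_const _).const_add _).fun_add
    ((hasDerivAt_pow 2 (0 : 𝕜)).mul_const _)

variable {ι : Type*} [Fintype ι] {A : Matrix ι ι ℝ}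

/-- The Gaussian density `exp (-xᵀAx / 2)`, not normalized. The scale `α` of the quadratic form is
absorbed in the matrix `A`. -/
noncomputable def gaussianWeight (A : Matrix ι ι ℝ) (x : ι → ℝ) : ℝ :=
  Real.exp (-(x ⬝ᵥ A *ᵥ x) / 2)

theorem continuous_gaussianWeight (A : Matrix ι ι ℝ) : Continuous (gaussianWeight A) := by
  unfold gaussianWeight
  fun_prop

open scoped MatrixOrder in
theorem exists_pos_mul_dotProduct_self_le (hA : A.PosDef) :
    ∃ c > 0, ∀ x : ι → ℝ, c * (x ⬝ᵥ x) ≤ x ⬝ᵥ A *ᵥ x := by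
  classical
  cases isEmpty_or_nonempty ι
  · exact ⟨1, one_pos, fun x => by simp⟩
  obtain ⟨c, hc, hcA⟩ := (CFC.exists_pos_algebraMap_le_iff hA.isHermitian).2
    fun r hr => hA.isStrictlyPositive.spectrum_pos hr
  refine ⟨c, hc, fun x => ?_⟩
  have h := (Matrix.le_iff.1 hcA).dotProduct_mulVec_nonneg x
  simpa [Algebra.algebraMap_eq_smul_one, sub_mulVec, smul_mulVec] using h

theorem integrable_eval_mul_gaussianWeight (hA : A.PosDef) (p : MvPolynomial ι ℝ) :
    Integrable fun x => eval x p * gaussianWeight A x := by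
  induction p using MvPolynomial.induction_on' with
  | add p q hp hq =>
    simp only [map_add, add_mul]
    exact hp.add hq
  | monomial u r =>
    obtain ⟨c, hc, hcA⟩ := exists_pos_mul_dotProduct_self_le hA
    have h_dominating : Integrable fun x : ι → ℝ =>
        r * ∏ i, (x i ^ u i * Real.exp (-(c / 2) * x i ^ 2)) := by
      refine (Integrable.fintype_prod (f := fun i y => y ^ u i * Real.exp (-(c / 2) * y ^ 2))
        fun i => ?_).const_mul r
      simpa using integrable_rpow_mul_exp_neg_mul_sq (half_pos hc) (s := u i)
        (neg_one_lt_zero.trans_le (u i).cast_nonneg)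
    refine h_dominating.mono
      ((continuous_eval _).mul (continuous_gaussianWeight A)).aestronglyMeasurable
      (.of_forall fun x => ?_)
    rw [eval_monomial, Finsupp.prod_fintype _ _ fun _ => pow_zero _, Finset.prod_mul_distrib,
      ← mul_assoc, norm_mul, norm_mul _ (∏ i, Real.exp _), ← Real.exp_sum, ← Finset.mul_sum]
    refine mul_le_mul_of_nonneg_left ?_ (norm_nonneg _)
    have h : c * ∑ i, x i ^ 2 ≤ x ⬝ᵥ A *ᵥ x := by simpa only [dotProduct, sq] using hcA x
    rw [gaussianWeight, Real.norm_of_nonneg (Real.exp_nonneg _),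
      Real.norm_of_nonneg (Real.exp_nonneg _)]
    gcongr
    linarith

theorem hasLineDerivAt_gaussianWeight [DecidableEq ι] (hA : A.IsSymm) (x : ι → ℝ) (c : ι) :
    HasLineDerivAt ℝ (gaussianWeight A) (-((A *ᵥ x) c * gaussianWeight A x)) x
      (Pi.single c 1) := by
  have h := ((hasLineDerivAt_dotProduct_mulVec_self hA x c).neg.div_const 2).exp
  refine h.congr_deriv ?_
  simp only [Pi.neg_apply, zero_smul, add_zero, gaussianWeight]
  ring

/-- The integral of a polynomial against `gaussianWeight A`, as a linear functional; the expectation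
`⟨p⟩` is its value at `p` divided by its value at `1`. -/
noncomputable def gaussianIntegral (hA : A.PosDef) : MvPolynomial ι ℝ →ₗ[ℝ] ℝ where
  toFun p := ∫ x, eval x p * gaussianWeight A x
  map_add' p q := by
    simp only [map_add, add_mul]
    exact integral_add (integrable_eval_mul_gaussianWeight hA p)
      (integrable_eval_mul_gaussianWeight hA q)
  map_smul' r p := by
    simp only [smul_eval, mul_assoc, RingHom.id_apply, smul_eq_mul, integral_const_mul]

theorem gaussianIntegral_one_pos (hA : A.PosDef) : 0 < gaussianIntegral hA 1 := by
  have h := integrable_eval_mul_gaussianWeight hA 1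
  simp only [gaussianIntegral, map_one, one_mul, LinearMap.coe_mk, AddHom.coe_mk] at h ⊢
  exact integral_exp_pos h

theorem gaussianIntegral_pderiv (hA : A.PosDef) (p : MvPolynomial ι ℝ) (c : ι) :
    gaussianIntegral hA (pderiv c p) = ∑ b, A c b * gaussianIntegral hA (X b * p) := by
  classical
  have h_symm : A.IsSymm := hA.isHermitian
  have h_deriv (x : ι → ℝ) : eval x p * -((A *ᵥ x) c * gaussianWeight A x) =
      -(eval x (∑ b, A c b • (X b * p)) * gaussianWeight A x) := by
    simp only [mulVec, dotProduct, map_sum, smul_eval, map_mul, eval_X, Finset.sum_mul,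
      Finset.mul_sum, ← Finset.sum_neg_distrib]
    refine Finset.sum_congr rfl fun b _ => ?_
    ring
  have h_parts := integral_bilinear_hasLineDerivAt_right_eq_neg_left_of_integrable
    (μ := (volume : Measure (ι → ℝ))) (B := ContinuousLinearMap.mul ℝ ℝ)
    (integrable_eval_mul_gaussianWeight hA (pderiv c p))
    (by
      simp only [ContinuousLinearMap.mul_apply', h_deriv]
      exact (integrable_eval_mul_gaussianWeight hA _).neg)
    (integrable_eval_mul_gaussianWeight hA p)
    (fun x _ => hasLineDerivAt_eval p x c)
    (fun x _ => hasLineDerivAt_gaussianWeight h_symm x c)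
  simp only [ContinuousLinearMap.mul_apply', h_deriv, integral_neg, neg_inj] at h_parts
  calc gaussianIntegral hA (pderiv c p)
      = gaussianIntegral hA (∑ b, A c b • (X b * p)) := h_parts.symm
    _ = ∑ b, A c b * gaussianIntegral hA (X b * p) := by
      simp only [map_sum, map_smul, smul_eq_mul]

theorem isSteinFunctional_gaussianIntegral [DecidableEq ι] (hA : A.PosDef) :
    IsSteinFunctional A⁻¹ (gaussianIntegral hA) := fun a p => by
  have h_inv : A⁻¹ * A = 1 := nonsing_inv_mul A ((isUnit_iff_isUnit_det A).1 hA.isUnit)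
  calc gaussianIntegral hA (X a * p)
      = ((A⁻¹ * A) *ᵥ fun c => gaussianIntegral hA (X c * p)) a := by rw [h_inv, one_mulVec]
    _ = ∑ b, A⁻¹ a b * gaussianIntegral hA (pderiv b p) := by
      simp only [← mulVec_mulVec, gaussianIntegral_pderiv]
      rfl

theorem isSteinFunctional_gaussianIntegral_smul [DecidableEq ι] {α : ℝ} (hα : 0 < α)
    {Q : Matrix ι ι ℝ} (hQ : Q.PosDef) :
    IsSteinFunctional (α⁻¹ • Q⁻¹) (gaussianIntegral (hQ.smul hα)) := by
  have h_inv : (α • Q)⁻¹ = α⁻¹ • Q⁻¹ :=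
    inv_smul' Q (Units.mk0 α hα.ne') ((isUnit_iff_isUnit_det Q).1 hQ.isUnit)
  exact h_inv ▸ isSteinFunctional_gaussianIntegral (hQ.smul hα)

theorem gaussianWeight_smul (α : ℝ) (Q : Matrix ι ι ℝ) (x : ι → ℝ) :
    gaussianWeight (α • Q) x = Real.exp (-(α / 2) * ∑ a, ∑ b, Q a b * x a * x b) := by
  have h_form : x ⬝ᵥ Q *ᵥ x = ∑ a, ∑ b, Q a b * x a * x b := by
    simp only [dotProduct, mulVec, Finset.mul_sum]
    iterate 2 refine Finset.sum_congr rfl fun _ _ => ?_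
    ring
  rw [gaussianWeight, smul_mulVec, dotProduct_smul, h_form, smul_eq_mul]
  congr 1
  ring

theorem gaussianIntegral_smul_apply {α : ℝ} (hα : 0 < α) {Q : Matrix ι ι ℝ} (hQ : Q.PosDef)
    (p : MvPolynomial ι ℝ) :
    gaussianIntegral (hQ.smul hα) p =
      ∫ x, eval x p * Real.exp (-(α / 2) * ∑ a, ∑ b, Q a b * x a * x b) :=
  integral_congr_ae (.of_forall fun x => congrArg (eval x p * ·) (gaussianWeight_smul α Q x))

end GaussianIntegral

theorem gaussian_cubic_quintic_vertices_nd_general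
    {ι : Type*} [Fintype ι] [DecidableEq ι] {α : ℝ} (hα : 0 < α)
    {Q : Matrix ι ι ℝ} (hQ : Q.PosDef) {V : ι → ι → ι → ℝ}
    (hV : ∀ (σ : Equiv.Perm (Fin 3)) (μ : Fin 3 → ι),
      V (μ (σ 0)) (μ (σ 1)) (μ (σ 2)) = V (μ 0) (μ 1) (μ 2))
    {U : ι → ι → ι → ι → ι → ℝ}
    (hU : ∀ (σ : Equiv.Perm (Fin 5)) (μ : Fin 5 → ι),
      U (μ (σ 0)) (μ (σ 1)) (μ (σ 2)) (μ (σ 3)) (μ (σ 4))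
        = U (μ 0) (μ 1) (μ 2) (μ 3) (μ 4)) :
    (∫ x : ι → ℝ, Real.exp (-(α / 2) * ∑ a, ∑ b, Q a b * x a * x b))⁻¹ *
      (∫ x : ι → ℝ,
        ((1 / 6) * ∑ a, ∑ b, ∑ c, V a b c * x a * x b * x c) *
        ((1 / 120) * ∑ a, ∑ b, ∑ c, ∑ d, ∑ e,
            U a b c d e * x a * x b * x c * x d * x e) *
        Real.exp (-(α / 2) * ∑ a, ∑ b, Q a b * x a * x b))
    = (1 / α ^ 4) *
        ((∑ a, ∑ b, ∑ c, ∑ d, ∑ e, ∑ f, ∑ g, ∑ h,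
            V a b c * U d e f g h *
              Q⁻¹ a d * Q⁻¹ b e * Q⁻¹ c f * Q⁻¹ g h) / 12 +
         (∑ a, ∑ b, ∑ c, ∑ d, ∑ e, ∑ f, ∑ g, ∑ h,
            V a b c * U d e f g h *
              Q⁻¹ a b * Q⁻¹ d e * Q⁻¹ f g * Q⁻¹ c h) / 16) := by
  let v : (Fin 3 → ι) → ℝ := fun μ => V (μ 0) (μ 1) (μ 2)
  let u : (Fin 5 → ι) → ℝ := fun μ => U (μ 0) (μ 1) (μ 2) (μ 3) (μ 4)
  let E := gaussianIntegral (hQ.smul hα)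
  have hE : IsSteinFunctional (α⁻¹ • Q⁻¹) E := isSteinFunctional_gaussianIntegral_smul hα hQ
  have hE_one : 0 < E 1 := gaussianIntegral_one_pos (hQ.smul hα)
  have h_partition : ∫ x : ι → ℝ, Real.exp (-(α / 2) * ∑ a, ∑ b, Q a b * x a * x b) = E 1 := by
    simp only [E, gaussianIntegral_smul_apply hα hQ, map_one, one_mul]
  have h_vertices : ∫ x : ι → ℝ,
      ((1 / 6) * ∑ a, ∑ b, ∑ c, V a b c * x a * x b * x c) *
        ((1 / 120) * ∑ a, ∑ b, ∑ c, ∑ d, ∑ e, U a b c d e * x a * x b * x c * x d * x e) *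
        Real.exp (-(α / 2) * ∑ a, ∑ b, Q a b * x a * x b) =
      E (tensorForm v * tensorForm u) / 720 := by
    rw [gaussianIntegral_smul_apply hα hQ, ← integral_div]
    refine integral_congr_ae (.of_forall fun x => ?_)
    simp only [map_mul, eval_tensorForm_three, eval_tensorForm_five]
    change _ = (∑ a, ∑ b, ∑ c, V a b c * x a * x b * x c) *
      (∑ a, ∑ b, ∑ c, ∑ d, ∑ e, U a b c d e * x a * x b * x c * x d * x e) * _ / 720
    ring
  change _ = 1 / α ^ 4 * (threeBondContraction Q⁻¹ v u / 12 + oneBondContraction Q⁻¹ v u / 16)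
  rw [h_partition, h_vertices, hE.map_cubicForm_mul_quinticForm (V := v) hV (U := u) hU,
    threeBondContraction_smul, oneBondContraction_smul]
  field_simp
  ring

/-- A cubic and a quintic vertex in `n` dimensions: for totally symmetric
tensors `V` (rank 3) and `U` (rank 5),
`⟨V₃(x) V₅(x)⟩ = (1/α⁴)(W₃/12 + W₄/16)`, where
`W₃ = V_{abc} U_{defgh} (Q⁻¹)^{ad}(Q⁻¹)^{be}(Q⁻¹)^{cf}(Q⁻¹)^{gh}` and
`W₄ = V_{abc} U_{defgh} (Q⁻¹)^{ab}(Q⁻¹)^{de}(Q⁻¹)^{fg}(Q⁻¹)^{ch}`. -/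
theorem gaussian_cubic_quintic_vertices_nd
    (n : ℕ) (α : ℝ) (hα : 0 < α) (Q : Matrix (Fin n) (Fin n) ℝ)
    (hQsymm : Q.IsSymm) (hQ : Q.PosDef)
    (V : Fin n → Fin n → Fin n → ℝ)
    (hV : ∀ (σ : Equiv.Perm (Fin 3)) (μ : Fin 3 → Fin n),
      V (μ (σ 0)) (μ (σ 1)) (μ (σ 2)) = V (μ 0) (μ 1) (μ 2))
    (U : Fin n → Fin n → Fin n → Fin n → Fin n → ℝ)
    (hU : ∀ (σ : Equiv.Perm (Fin 5)) (μ : Fin 5 → Fin n),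
      U (μ (σ 0)) (μ (σ 1)) (μ (σ 2)) (μ (σ 3)) (μ (σ 4))
        = U (μ 0) (μ 1) (μ 2) (μ 3) (μ 4)) :
    (∫ x : Fin n → ℝ, Real.exp (-(α / 2) * ∑ a, ∑ b, Q a b * x a * x b))⁻¹ *
      (∫ x : Fin n → ℝ,
        ((1 / 6) * ∑ a, ∑ b, ∑ c, V a b c * x a * x b * x c) *
        ((1 / 120) * ∑ a, ∑ b, ∑ c, ∑ d, ∑ e,
            U a b c d e * x a * x b * x c * x d * x e) *
        Real.exp (-(α / 2) * ∑ a, ∑ b, Q a b * x a * x b))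
    = (1 / α ^ 4) *
        ((∑ a, ∑ b, ∑ c, ∑ d, ∑ e, ∑ f, ∑ g, ∑ h,
            V a b c * U d e f g h *
              Q⁻¹ a d * Q⁻¹ b e * Q⁻¹ c f * Q⁻¹ g h) / 12 +
         (∑ a, ∑ b, ∑ c, ∑ d, ∑ e, ∑ f, ∑ g, ∑ h,
            V a b c * U d e f g h *
              Q⁻¹ a b * Q⁻¹ d e * Q⁻¹ f g * Q⁻¹ c h) / 16) :=
  gaussian_cubic_quintic_vertices_nd_general hα hQ hV hU
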